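/- Let K = ℝ. Consider the list of algebras: S(0,1,1,0,−1,2); S(0,4,−4,−4,4,0); S(0,εt,t,0,δt,0) for t, ε, δ ∈ {1,−1}; and S(0,(1+t)²/4,(t²−1)/4,1,(1−t²)/4,t) for t ∈ ℝ* with t ≠ 1 and t ≠ −1. Then: (1) every endo-commutative algebra S(0,q,a,b,c,d) over ℝ with a ≠ 0 and c ≠ 0 is isomorphic to at least one algebra in this list; (2) any two algebras in the list with distinct parameter tuples are non-isomorphic. -/

import Mathlib

/-- Multiplication of the 2-dimensional algebra `S(p,q,a,b,c,d)` on `K × K`,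
with basis `e = (1,0)`, `f = (0,1)` and table
`e*e = f`, `f*f = p•e + q•f`, `e*f = a•e + b•f`, `f*e = c•e + d•f`. -/
def mulS {K : Type*} [Field K] (p q a b c d : K) (u v : K × K) : K × K :=
  (u.1 * v.2 * a + u.2 * v.1 * c + u.2 * v.2 * p,
   u.1 * v.1 + u.1 * v.2 * b + u.2 * v.1 * d + u.2 * v.2 * q)

/-- `S(p,q,a,b,c,d)` is endo-commutative: `(x*x)*(y*y) = (x*y)*(x*y)`. -/
def EndoComm {K : Type*} [Field K] (p q a b c d : K) : Prop :=
  ∀ u v : K × K,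
    mulS p q a b c d (mulS p q a b c d u u) (mulS p q a b c d v v) =
      mulS p q a b c d (mulS p q a b c d u v) (mulS p q a b c d u v)

/-- `S(p,q,a,b,c,d)` and `S(p',q',a',b',c',d')` are isomorphic: there is a bijective
`K`-linear map between them preserving multiplication. -/
def IsoS {K : Type*} [Field K] (p q a b c d p' q' a' b' c' d' : K) : Prop :=
  ∃ φ : (K × K) ≃ₗ[K] (K × K),
    ∀ u v : K × K,
      φ (mulS p q a b c d u v) = mulS p' q' a' b' c' d' (φ u) (φ v)

/-- The parameter tuples appearing in the classification list over `ℝ`. -/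
def InListR (p q a b c d : ℝ) : Prop :=
  (p, q, a, b, c, d) = ((0 : ℝ), 1, 1, 0, -1, 2) ∨
  (p, q, a, b, c, d) = ((0 : ℝ), 4, -4, -4, 4, 0) ∨
  (∃ t ε δ : ℝ, (t = 1 ∨ t = -1) ∧ (ε = 1 ∨ ε = -1) ∧ (δ = 1 ∨ δ = -1) ∧
      (p, q, a, b, c, d) = ((0 : ℝ), ε * t, t, 0, δ * t, 0)) ∨
  (∃ t : ℝ, t ≠ 0 ∧ t ≠ 1 ∧ t ≠ -1 ∧
      (p, q, a, b, c, d) =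
        ((0 : ℝ), (1 + t) ^ 2 / 4, (t ^ 2 - 1) / 4, 1, (1 - t ^ 2) / 4, t))

/-- A lower triangular linear automorphism of the plane. -/
noncomputable def triEquiv (x y w : ℝ) (hx : x ≠ 0) (hw : w ≠ 0) : (ℝ × ℝ) ≃ₗ[ℝ] (ℝ × ℝ) where
  toFun u := (x * u.1, y * u.1 + w * u.2)
  invFun v := (v.1 / x, (v.2 - y * (v.1 / x)) / w)
  map_add' u v := by ext <;> simp <;> ring
  map_smul' r u := by ext <;> simp <;> ring
  left_inv u := by ext <;> simp <;> field_simp; ring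
  right_inv u := by ext <;> simp <;> field_simp; ring

/-- Isomorphisms sending `e` to `x e + y f` and `f` to `w f`. -/
lemma iso_tri {q a b c d q' a' b' c' d' : ℝ} (x y w : ℝ) (hx : x ≠ 0) (hw : w ≠ 0)
    (h0 : a' + c' = 0) (h1 : w = x ^ 2 + (b' + d') * (x * y) + q' * y ^ 2)
    (h2 : q = q' * w) (h3 : a = a' * w) (h4 : c = c' * w)
    (h5 : a * y + b * w = x * w * b' + y * w * q')
    (h6 : c * y + d * w = x * w * d' + y * w * q') :
    IsoS 0 q a b c d 0 q' a' b' c' d' := by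
  refine ⟨triEquiv x y w hx hw, fun u v => ?_⟩
  obtain ⟨u1, u2⟩ := u
  obtain ⟨v1, v2⟩ := v
  have hc : c' = -a' := by linarith
  subst hc
  simp only [triEquiv, mulS, LinearEquiv.coe_mk, LinearMap.coe_mk, AddHom.coe_mk]
  ext
  · simp only
    rw [h3, h4]; ring
  · simp only
    linear_combination u1 * v1 * h1 + u1 * v2 * h5 + u2 * v1 * h6 + u2 * v2 * w * h2

/-- Diagonal isomorphisms. -/
lemma iso_diag {q a b c d q' a' b' c' d' : ℝ} (x : ℝ) (hx : x ≠ 0)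
    (h2 : q = q' * x ^ 2) (h3 : a = a' * x ^ 2) (h4 : c = c' * x ^ 2)
    (h5 : b = x * b') (h6 : d = x * d') :
    IsoS 0 q a b c d 0 q' a' b' c' d' := by
  refine ⟨triEquiv x 0 (x ^ 2) hx (pow_ne_zero 2 hx), fun u v => ?_⟩
  obtain ⟨u1, u2⟩ := u
  obtain ⟨v1, v2⟩ := v
  simp only [triEquiv, mulS, LinearEquiv.coe_mk, LinearMap.coe_mk, AddHom.coe_mk]
  subst h2 h3 h4 h5 h6
  ext <;> simp only <;> ring

lemma iso_symm {p q a b c d p' q' a' b' c' d' : ℝ} (h : IsoS p q a b c d p' q' a' b' c' d') :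
    IsoS p' q' a' b' c' d' p q a b c d := by
  obtain ⟨φ, h⟩ := h
  refine ⟨φ.symm, fun u v => ?_⟩
  apply φ.injective
  rw [h]; simp

/-- The coordinates of an isomorphism. -/
lemma iso_eqs {q a b c d q' a' b' c' d' : ℝ} (h : IsoS 0 q a b c d 0 q' a' b' c' d') :
    ∃ x y z w : ℝ, x * w - y * z ≠ 0 ∧
      z = x * y * (a' + c') ∧ w = x ^ 2 + (b' + d') * (x * y) + q' * y ^ 2 ∧
      q * z = z * w * (a' + c') ∧ q * w = z ^ 2 + (b' + d') * (z * w) + q' * w ^ 2 ∧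
      a * x + b * z = x * w * a' + y * z * c' ∧
      a * y + b * w = x * z + x * w * b' + y * z * d' + y * w * q' ∧
      c * x + d * z = z * y * a' + w * x * c' ∧
      c * y + d * w = z * x + z * y * b' + w * x * d' + w * y * q' := by
  obtain ⟨φ, h⟩ := h
  obtain ⟨x, y, hxy⟩ : ∃ x y, φ (1, 0) = (x, y) := ⟨_, _, rfl⟩
  obtain ⟨z, w, hzw⟩ : ∃ z w, φ (0, 1) = (z, w) := ⟨_, _, rfl⟩
  have hφ : ∀ s t : ℝ, φ (s, t) = (s * x + t * z, s * y + t * w) := by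
    intro s t
    have : ((s, t) : ℝ × ℝ) = s • (1, 0) + t • (0, 1) := by simp
    rw [this, map_add, map_smul, map_smul, hxy, hzw]; simp
  have h1 := h (1, 0) (1, 0)
  have h2 := h (0, 1) (0, 1)
  have h3 := h (1, 0) (0, 1)
  have h4 := h (0, 1) (1, 0)
  simp only [mulS, hφ, Prod.mk.injEq] at h1 h2 h3 h4
  refine ⟨x, y, z, w, ?_, ?_, ?_, ?_, ?_, ?_, ?_, ?_, ?_⟩
  · intro hdet
    have k1 : φ (w, -y) = 0 := by
      rw [hφ]; ext <;> simp <;> linarith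
    have k2 : φ (z, -x) = 0 := by
      rw [hφ]; ext <;> simp <;> linarith
    have k1' := φ.map_eq_zero_iff.1 k1
    have k2' := φ.map_eq_zero_iff.1 k2
    simp only [Prod.mk_eq_zero, neg_eq_zero] at k1' k2'
    have := hφ 1 0
    rw [k1'.2, k2'.2] at this
    have k3 := φ.map_eq_zero_iff.1 (this.trans (by simp))
    simp at k3
  · linarith [h1.1]
  · linarith [h1.2]
  · linarith [h2.1]
  · linarith [h2.2]
  · linarith [h3.1]
  · linarith [h3.2]
  · linarith [h4.1]
  · linarith [h4.2]

/-- Solving the endo-commutativity equations. -/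
lemma endo_cases {q a b c d : ℝ} (ha : a ≠ 0) (hc : c ≠ 0) (h : EndoComm 0 q a b c d) :
    (b = 0 ∧ d = 0 ∧ q ^ 2 = a ^ 2 ∧ c ^ 2 = a ^ 2) ∨
    (c = -a ∧ q = (b + d) ^ 2 / 4 ∧ a = (d ^ 2 - b ^ 2) / 4) ∨
    (c = -a ∧ b = 0 ∧ a = q) ∨ (c = -a ∧ d = 0 ∧ a = -q) := by
  have h1 := h (1, 0) (0, 1)
  have h2 := h (0, 1) (1, 0)
  have h3 := h (1, 1) (1, 0)
  simp only [mulS, Prod.mk.injEq] at h1 h2 h3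
  obtain ⟨h1, h1'⟩ := h1
  obtain ⟨h2, h2'⟩ := h2
  obtain ⟨h3, h3'⟩ := h3
  ring_nf at h1 h1' h2 h2' h3 h3'
  by_cases hac : a + c = 0
  · right
    have hca : c = -a := by linarith
    subst hca
    have e1 : a ^ 2 + a * b * (b + d) + b ^ 2 * q = q ^ 2 := by linarith
    have e2 : a ^ 2 - a * d * (b + d) + d ^ 2 * q = q ^ 2 := by linarith
    have e3 : q * (d - b) = a * (b + d) := by linarith
    have hq : q ≠ 0 := by
      rintro rfl
      have : b + d = 0 := by
        have : a * (b + d) = 0 := by linarith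
        simpa [ha] using this
      rw [this] at e1
      apply ha
      nlinarith
    by_cases hs : b + d = 0
    · have hd : d = -b := by linarith
      subst hd
      have hb : b = 0 := by
        have : q * b = 0 := by linarith
        simpa [hq] using this
      subst hb
      have : (a - q) * (a + q) = 0 := by linarith
      rcases mul_eq_zero.1 this with h | h
      · right; left; exact ⟨rfl, rfl, by linarith⟩
      · right; right; exact ⟨rfl, by simp, by linarith⟩
    · have e4 : q * (b * d) * ((b + d) ^ 2 - 4 * q) = 0 := by
        have := congrArg (· * (b + d) ^ 2) e1
        linear_combination this + (q * (d - b) + a * (b + d) + b * (b + d) ^ 2) * e3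
      rcases mul_eq_zero.1 e4 with h | h
      · have h : b * d = 0 := by simpa [hq] using h
        rcases mul_eq_zero.1 h with h | h
        · subst h
          right; left
          refine ⟨rfl, rfl, ?_⟩
          have hd : d ≠ 0 := by simpa using hs
          apply mul_right_cancel₀ hd; linarith
        · subst h
          right; right
          refine ⟨rfl, rfl, ?_⟩
          have hd : b ≠ 0 := by simpa using hs
          apply mul_right_cancel₀ hd; linarith
      · left
        have hq' : q = (b + d) ^ 2 / 4 := by linarith
        refine ⟨rfl, hq', ?_⟩
        apply mul_right_cancel₀ hs
        rw [← e3, hq']; ring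
  · left
    have hb : b = 0 := by
      have : a * b * (a + c) = 0 := by linarith
      simpa [ha, hac] using this
    have hd : d = 0 := by
      have : c * d * (a + c) = 0 := by linarith
      simpa [hc, hac] using this
    subst hb hd
    refine ⟨rfl, rfl, ?_, ?_⟩ <;> linarith

lemma mem3 {t ε δ : ℝ} (ht : t = 1 ∨ t = -1) (hε : ε = 1 ∨ ε = -1) (hδ : δ = 1 ∨ δ = -1) :
    InListR 0 (ε * t) t 0 (δ * t) 0 :=
  Or.inr (Or.inr (Or.inl ⟨t, ε, δ, ht, hε, hδ, rfl⟩))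

lemma exists_sign_sqrt {r : ℝ} (hr : r ≠ 0) :
    ∃ x t : ℝ, x ≠ 0 ∧ (t = 1 ∨ t = -1) ∧ r = t * x ^ 2 := by
  rcases lt_or_gt_of_ne hr with h | h
  · refine ⟨√(-r), -1, (Real.sqrt_pos.2 (by linarith)).ne', Or.inr rfl, ?_⟩
    rw [Real.sq_sqrt (by linarith)]; ring
  · refine ⟨√r, 1, (Real.sqrt_pos.2 h).ne', Or.inl rfl, ?_⟩
    rw [Real.sq_sqrt h.le]; ring

/-- Degenerate case, reached by scaling. -/
lemma part1_deg {b d : ℝ} (ha : (d ^ 2 - b ^ 2) / 4 ≠ 0) :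
    ∃ p' q' a' b' c' d' : ℝ, InListR p' q' a' b' c' d' ∧
      IsoS 0 ((b + d) ^ 2 / 4) ((d ^ 2 - b ^ 2) / 4) b (-((d ^ 2 - b ^ 2) / 4)) d
        p' q' a' b' c' d' := by
  by_cases hb : b = 0
  · subst hb
    have hd : d ≠ 0 := by rintro rfl; simp at ha
    exact ⟨_, _, _, _, _, _, Or.inl rfl, iso_diag (d / 2) (by positivity) (by ring) (by ring)
      (by ring) (by ring) (by ring)⟩
  by_cases hd : d = 0
  · subst hd
    exact ⟨_, _, _, _, _, _, Or.inr (Or.inl rfl), iso_diag (-b / 4)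
      (by simpa using hb) (by ring) (by ring)
      (by ring) (by ring) (by ring)⟩
  · refine ⟨_, _, _, _, _, _, Or.inr (Or.inr (Or.inr ⟨d / b, by positivity, ?_, ?_, rfl⟩)),
      iso_diag b hb ?_ ?_ ?_ ?_ ?_⟩
    · intro h
      rw [div_eq_iff hb] at h
      apply ha; rw [h]; ring
    · intro h
      rw [div_eq_iff hb] at h
      apply ha; rw [h]; ring
    all_goals field_simp
    all_goals ring

/-- Nondegenerate anticommuting-type case: complete the square. -/
lemma part1_nondeg {q a b d ε : ℝ} (hε : ε = 1 ∨ ε = -1) (hq : q ≠ 0) (ha : a = ε * q)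
    (hn : (b + d) ^ 2 - 4 * q ≠ 0) (h : q * (d - b) = a * (b + d)) :
    ∃ p' q' a' b' c' d' : ℝ, InListR p' q' a' b' c' d' ∧
      IsoS 0 q a b (-a) d p' q' a' b' c' d' := by
  obtain ⟨x, τ, hx, hτ, hr⟩ := exists_sign_sqrt (r := q - (b + d) ^ 2 / 4)
    (by intro h; apply hn; linarith)
  have hτ2 : τ ^ 2 = 1 := by rcases hτ with rfl | rfl <;> norm_num
  have hε2 : ε ^ 2 = 1 := by rcases hε with rfl | rfl <;> norm_num
  have hτ0 : τ ≠ 0 := by rintro rfl; norm_num at hτ2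
  have hdb : d - b = ε * (b + d) := by
    apply mul_left_cancel₀ hq; rw [h, ha]; ring
  refine ⟨_, _, _, _, _, _, mem3 (t := ε * τ) (ε := ε) (δ := -1) ?_ hε (Or.inr rfl),
    iso_tri x (τ * (b + d) / 2) (τ * q) hx (mul_ne_zero hτ0 hq) (by ring) ?_ ?_ ?_ ?_ ?_ ?_⟩
  · rcases hτ with rfl | rfl <;> rcases hε with rfl | rfl <;> norm_num
  · rcases hτ with rfl | rfl <;> rcases hε with rfl | rfl <;> linarith
  · linear_combination (-q * τ ^ 2) * hε2 - q * hτ2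
  · rw [ha]; linear_combination (-ε * q) * hτ2
  · rw [ha]; linear_combination (ε * q) * hτ2
  · rcases hτ with rfl | rfl <;> rcases hε with rfl | rfl <;> subst ha <;> grind
  · rcases hτ with rfl | rfl <;> rcases hε with rfl | rfl <;> subst ha <;> grind

lemma part1 (q a b c d : ℝ) (ha : a ≠ 0) (hc : c ≠ 0) (h : EndoComm 0 q a b c d) :
    ∃ p' q' a' b' c' d' : ℝ, InListR p' q' a' b' c' d' ∧
      IsoS 0 q a b c d p' q' a' b' c' d' := by
  rcases endo_cases ha hc h with ⟨rfl, rfl, hq, hca⟩ | ⟨rfl, rfl, rfl⟩ | ⟨rfl, rfl, rfl⟩ |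
    ⟨rfl, rfl, hq⟩
  · obtain ⟨x, t, hx, ht, hr⟩ := exists_sign_sqrt ha
    obtain ⟨ε, hε, hε'⟩ : ∃ ε : ℝ, (ε = 1 ∨ ε = -1) ∧ q = ε * a := by
      rcases sq_eq_sq_iff_eq_or_eq_neg.1 hq with h | h
      · exact ⟨1, Or.inl rfl, by linarith⟩
      · exact ⟨-1, Or.inr rfl, by linarith⟩
    obtain ⟨δ, hδ, hδ'⟩ : ∃ ε : ℝ, (ε = 1 ∨ ε = -1) ∧ c = ε * a := by
      rcases sq_eq_sq_iff_eq_or_eq_neg.1 hca with h | h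
      · exact ⟨1, Or.inl rfl, by linarith⟩
      · exact ⟨-1, Or.inr rfl, by linarith⟩
    refine ⟨_, _, _, _, _, _, mem3 ht hε hδ, iso_diag x hx ?_ hr ?_ (by simp) (by simp)⟩
    · rw [hε', hr]; ring
    · rw [hδ', hr]; ring
  · exact part1_deg ha
  · by_cases hn : (0 + d) ^ 2 - 4 * a = 0
    · have e : a = (d ^ 2 - 0 ^ 2) / 4 := by linarith
      have e' : a = (0 + d) ^ 2 / 4 := by linarith
      have := part1_deg (b := 0) (d := d) (by rwa [← e])
      rwa [← e, ← e'] at this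
    · exact part1_nondeg (Or.inl rfl) ha (by ring) hn (by ring)
  · have hq0 : q ≠ 0 := by rintro rfl; simp at hq; exact ha hq
    by_cases hn : (b + 0) ^ 2 - 4 * q = 0
    · have e : a = (0 ^ 2 - b ^ 2) / 4 := by linarith
      have e' : q = (b + 0) ^ 2 / 4 := by linarith
      have := part1_deg (b := b) (d := 0) (by rwa [← e])
      rwa [← e, ← e'] at this
    · exact part1_nondeg (Or.inr rfl) hq0 (by linarith) hn (by rw [hq]; ring)

/-- Invariants when the target has `a' + c' = 0`. -/
lemma inv_anti {q a b c d q' a' b' c' d' : ℝ} (h : IsoS 0 q a b c d 0 q' a' b' c' d')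
    (h0 : a' + c' = 0) : a + c = 0 ∧ a * q' = a' * q ∧
      ∃ x : ℝ, x ≠ 0 ∧ (b + d) ^ 2 - 4 * q = x ^ 2 * ((b' + d') ^ 2 - 4 * q') := by
  obtain ⟨x, y, z, w, hdet, h1, h2, h3, h4, h5, h6, h7, h8⟩ := iso_eqs h
  have hz : z = 0 := by rw [h1, h0]; ring
  subst hz
  have hx : x ≠ 0 := by rintro rfl; simp at hdet
  have hw : w ≠ 0 := by rintro rfl; simp at hdet
  have ea : a = w * a' := by apply mul_right_cancel₀ hx; linarith
  have ec : c = w * c' := by apply mul_right_cancel₀ hx; linarith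
  have eq : q = w * q' := by apply mul_right_cancel₀ hw; linarith
  have es : b + d = x * (b' + d') + 2 * y * q' := by
    apply mul_right_cancel₀ hw
    rw [ea] at h6
    rw [ec] at h8
    linear_combination h6 + h8 - y * w * h0
  refine ⟨?_, ?_, x, hx, ?_⟩
  · rw [ea, ec, ← mul_add, h0, mul_zero]
  · rw [ea, eq]; ring
  · rw [es, eq, h2]; ring

/-- The commutative members of the list. -/
lemma comm_case {t ε t' ε' : ℝ} (ht : t = 1 ∨ t = -1) (hε : ε = 1 ∨ ε = -1)
    (ht' : t' = 1 ∨ t' = -1) (hε' : ε' = 1 ∨ ε' = -1)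
    (h : IsoS 0 (ε * t) t 0 (1 * t) 0 0 (ε' * t') t' 0 (1 * t') 0) : t = t' ∧ ε = ε' := by
  obtain ⟨x, y, z, w, hdet, h1, h2, h3, h4, h5, h6, h7, h8⟩ := iso_eqs h
  by_cases hz : z = 0
  · subst hz
    have hx : x ≠ 0 := by rintro rfl; simp at hdet
    have hw : w ≠ 0 := by rintro rfl; simp at hdet
    have ea : t = w * t' := by apply mul_right_cancel₀ hx; linarith
    have eq : ε * t = w * (ε' * t') := by apply mul_right_cancel₀ hw; linarith
    have hy : y = 0 := by
      have ht0 : t' ≠ 0 := by rcases ht' with rfl | rfl <;> norm_num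
      have : (x * t') * y = 0 := by linarith
      exact (mul_eq_zero.1 this).resolve_left (mul_ne_zero hx ht0)
    subst hy
    have hw : 0 < w := by
      have : 0 < x ^ 2 := by positivity
      linarith
    rcases ht with rfl | rfl <;> rcases ht' with rfl | rfl <;> rcases hε with rfl | rfl <;>
      rcases hε' with rfl | rfl <;> constructor <;> linarith
  · have hx : x ≠ 0 := by rintro rfl; simp at h1; exact hz h1
    have hy : y ≠ 0 := by rintro rfl; simp at h1; exact hz h1
    have e1 : ε * t = w * (2 * t') := by apply mul_right_cancel₀ hz; linarith
    have t2 : t' ^ 2 = 1 := by rcases ht' with rfl | rfl <;> norm_num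
    have e2 : t = t' * w + 2 * y ^ 2 := by
      apply mul_right_cancel₀ hx
      rw [h1] at h5
      linear_combination h5 + 2 * x * y ^ 2 * t2
    have e3 : t = 2 * t' * x ^ 2 + ε' * t' * w := by
      apply mul_right_cancel₀ hy
      rw [h1] at h6
      linear_combination h6
    have px : 0 < x ^ 2 := by positivity
    have py : 0 < y ^ 2 := by positivity
    have hd : w - 2 * t' * y ^ 2 ≠ 0 := by
      intro h; apply hdet; rw [h1]; linear_combination x * h
    rcases ht with rfl | rfl <;> rcases ht' with rfl | rfl <;> rcases hε with rfl | rfl <;>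
      rcases hε' with rfl | rfl <;>
      first
      | exact ⟨rfl, rfl⟩
      | (exfalso; linarith)
      | (exfalso; apply hd; linarith)

/-- Members of the list are either of commutative type or have `a + c = 0` with nice invariants. -/
lemma list_split {p q a b c d : ℝ} (h : InListR p q a b c d) :
    (∃ t ε : ℝ, (t = 1 ∨ t = -1) ∧ (ε = 1 ∨ ε = -1) ∧
      (p, q, a, b, c, d) = ((0 : ℝ), ε * t, t, 0, 1 * t, 0)) ∨
    (∃ t ε : ℝ, (t = 1 ∨ t = -1) ∧ (ε = 1 ∨ ε = -1) ∧
      (p, q, a, b, c, d) = ((0 : ℝ), ε * t, t, 0, -1 * t, 0)) ∨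
    (p = 0 ∧ c = -a ∧ q ≠ 0 ∧ (b + d) ^ 2 - 4 * q = 0 ∧
      ((q = 1 ∧ a = 1 ∧ b = 0 ∧ d = 2) ∨ (q = 4 ∧ a = -4 ∧ b = -4 ∧ d = 0) ∨
        (d ≠ 0 ∧ d ≠ -1 ∧ q = (1 + d) ^ 2 / 4 ∧ a = (d ^ 2 - 1) / 4 ∧ b = 1))) := by
  rcases h with h | h | ⟨t, ε, δ, ht, hε, rfl | rfl, h⟩ | ⟨t, h0, h1, h2, h⟩
  · simp only [Prod.mk.injEq] at h
    obtain ⟨rfl, rfl, rfl, rfl, rfl, rfl⟩ := h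
    right; right; norm_num
  · simp only [Prod.mk.injEq] at h
    obtain ⟨rfl, rfl, rfl, rfl, rfl, rfl⟩ := h
    right; right; norm_num
  · exact Or.inl ⟨t, ε, ht, hε, h⟩
  · exact Or.inr (Or.inl ⟨t, ε, ht, hε, h⟩)
  · simp only [Prod.mk.injEq] at h
    obtain ⟨rfl, rfl, rfl, rfl, rfl, rfl⟩ := h
    right; right
    have : 1 + d ≠ 0 := by intro h; apply h2; linarith
    refine ⟨rfl, by ring, by positivity, by ring, Or.inr (Or.inr ⟨h0, h2, rfl, rfl, rfl⟩)⟩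

lemma part2 (p₁ q₁ a₁ b₁ c₁ d₁ p₂ q₂ a₂ b₂ c₂ d₂ : ℝ)
    (h₁ : InListR p₁ q₁ a₁ b₁ c₁ d₁) (h₂ : InListR p₂ q₂ a₂ b₂ c₂ d₂)
    (h : IsoS p₁ q₁ a₁ b₁ c₁ d₁ p₂ q₂ a₂ b₂ c₂ d₂) :
    (p₁, q₁, a₁, b₁, c₁, d₁) = (p₂, q₂, a₂, b₂, c₂, d₂) := by
  rcases list_split h₁ with ⟨t, ε, ht, hε, e⟩ | ⟨t, ε, ht, hε, e⟩ | ⟨rfl, hc, hq, hn, e⟩ <;>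
  rcases list_split h₂ with ⟨t', ε', ht', hε', e'⟩ | ⟨t', ε', ht', hε', e'⟩ |
    ⟨rfl, hc', hq', hn', e'⟩ <;> simp only [Prod.mk.injEq] at e e' ⊢
  · obtain ⟨rfl, rfl, rfl, rfl, rfl, rfl⟩ := e
    obtain ⟨rfl, rfl, rfl, rfl, rfl, rfl⟩ := e'
    obtain ⟨rfl, rfl⟩ := comm_case ht hε ht' hε' h
    simp
  · obtain ⟨rfl, rfl, rfl, rfl, rfl, rfl⟩ := e
    obtain ⟨rfl, rfl, rfl, rfl, rfl, rfl⟩ := e'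
    have := (inv_anti h (by ring)).1
    rcases ht with rfl | rfl <;> norm_num at this
  · obtain ⟨rfl, rfl, rfl, rfl, rfl, rfl⟩ := e
    have := (inv_anti h (by rw [hc']; ring)).1
    rcases ht with rfl | rfl <;> norm_num at this
  · obtain ⟨rfl, rfl, rfl, rfl, rfl, rfl⟩ := e
    obtain ⟨rfl, rfl, rfl, rfl, rfl, rfl⟩ := e'
    have := (inv_anti (iso_symm h) (by ring)).1
    rcases ht' with rfl | rfl <;> norm_num at this
  · obtain ⟨rfl, rfl, rfl, rfl, rfl, rfl⟩ := e
    obtain ⟨rfl, rfl, rfl, rfl, rfl, rfl⟩ := e'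
    obtain ⟨-, k1, x, hx, k2⟩ := inv_anti h (by ring)
    have px : 0 < x ^ 2 := by positivity
    rcases ht with rfl | rfl <;> rcases ht' with rfl | rfl <;> rcases hε with rfl | rfl <;>
      rcases hε' with rfl | rfl <;>
      first
      | (norm_num; done)
      | (exfalso; linarith)
  · obtain ⟨rfl, rfl, rfl, rfl, rfl, rfl⟩ := e
    obtain ⟨-, k1, x, hx, k2⟩ := inv_anti h (by rw [hc']; ring)
    rw [hn'] at k2
    rcases ht with rfl | rfl <;> rcases hε with rfl | rfl <;> norm_num at k2
  · obtain ⟨rfl, rfl, rfl, rfl, rfl, rfl⟩ := e'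
    have := (inv_anti (iso_symm h) (by rw [hc]; ring)).1
    rcases ht' with rfl | rfl <;> norm_num at this
  · obtain ⟨rfl, rfl, rfl, rfl, rfl, rfl⟩ := e'
    obtain ⟨-, k1, x, hx, k2⟩ := inv_anti (iso_symm h) (by rw [hc]; ring)
    rw [hn] at k2
    rcases ht' with rfl | rfl <;> rcases hε' with rfl | rfl <;> norm_num at k2
  · obtain ⟨-, k1, -⟩ := inv_anti h (by rw [hc']; ring)
    subst hc hc'
    clear h h₁ h₂ hn hn'
    rcases e with ⟨rfl, rfl, rfl, rfl⟩ | ⟨rfl, rfl, rfl, rfl⟩ | ⟨f0, f1, rfl, rfl, rfl⟩ <;>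
    rcases e' with ⟨rfl, rfl, rfl, rfl⟩ | ⟨rfl, rfl, rfl, rfl⟩ | ⟨g0, g1, rfl, rfl, rfl⟩
    · simp
    · norm_num at k1
    · exfalso; apply g1; linarith
    · norm_num at k1
    · simp
    · exfalso
      have : (1 + d₂) * d₂ = 0 := by linarith
      rcases mul_eq_zero.1 this with h | h
      · apply g1; linarith
      · exact g0 h
    · exfalso; apply f1; linarith
    · exfalso
      have : (1 + d₁) * d₁ = 0 := by linarith
      rcases mul_eq_zero.1 this with h | h
      · apply f1; linarith
      · exact f0 h
    · have k : ((1 + d₁) * (1 + d₂)) * (d₁ - d₂) = 0 := by linarith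
      have n1 : 1 + d₁ ≠ 0 := by intro h; apply f1; linarith
      have n2 : 1 + d₂ ≠ 0 := by intro h; apply g1; linarith
      have : d₁ = d₂ := by
        have := (mul_eq_zero.1 k).resolve_left (mul_ne_zero n1 n2)
        linarith
      subst this; simp


theorem classification_II1_real :
    (∀ q a b c d : ℝ, a ≠ 0 → c ≠ 0 → EndoComm 0 q a b c d →
        ∃ p' q' a' b' c' d' : ℝ, InListR p' q' a' b' c' d' ∧
          IsoS 0 q a b c d p' q' a' b' c' d') ∧
    (∀ p₁ q₁ a₁ b₁ c₁ d₁ p₂ q₂ a₂ b₂ c₂ d₂ : ℝ,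
        InListR p₁ q₁ a₁ b₁ c₁ d₁ → InListR p₂ q₂ a₂ b₂ c₂ d₂ →
        (p₁, q₁, a₁, b₁, c₁, d₁) ≠ (p₂, q₂, a₂, b₂, c₂, d₂) →
        ¬ IsoS p₁ q₁ a₁ b₁ c₁ d₁ p₂ q₂ a₂ b₂ c₂ d₂) := by
  exact ⟨part1, fun p₁ q₁ a₁ b₁ c₁ d₁ p₂ q₂ a₂ b₂ c₂ d₂ h₁ h₂ hne h =>
    hne (part2 p₁ q₁ a₁ b₁ c₁ d₁ p₂ q₂ a₂ b₂ c₂ d₂ h₁ h₂ h)⟩
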